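/- Let G=(V,E) be a finite graph and let p∈(0,1). Then (d/dp) E_p(L^{(1)}) ≥ (1/(2(1−p))) · E_p( |∂_E 𝒞^{(1)}| ), where (d/dp) E_p(L^{(1)}) is the derivative at p of the map q ↦ E_q(L^{(1)}), 𝒞^{(1)} is the vertex set of the largest connected component of the random configuration, and ∂_E 𝒞^{(1)} is the set of edges of G with exactly one endpoint in 𝒞^{(1)}. -/

import Mathlib

/-!
Let `L x` be the size of the largest component. By Russo's formula, `d/dp E_p L` is the sum over
the edges `e` of `E_p (D_e L)`, where `D_e L` is the gain in `L` when `e` is switched from closed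
to open. Since `D_e L` does not depend on the state of `e`, which is closed with probability
`1 - p`, this sum equals `(1 - p)⁻¹` times the expected sum of `D_e L` over the closed edges.
Every edge on the boundary of a largest component is closed, and opening it attaches at least one
further vertex to that component, so it contributes at least `1` to the sum; every other edge
contributes at least `0`, because `L` is increasing.
-/

open Filter

noncomputable section

/-- The spanning subgraph of `G` determined by the configuration `x : {0,1}^E`:
an edge of `G` is retained iff its coordinate equals `true`. -/
def percoGraph {V : Type*} (G : SimpleGraph V) (x : G.edgeSet → Bool) : SimpleGraph V :=
  SimpleGraph.fromEdgeSet {e : Sym2 V | ∃ h : e ∈ G.edgeSet, x ⟨e, h⟩ = true}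

/-- The vertex set of the connected component of `v` in the configuration `x`. -/
def percoComp {V : Type*} (G : SimpleGraph V) (x : G.edgeSet → Bool) (v : V) : Set V :=
  {u | (percoGraph G x).Reachable v u}

/-- The number of vertices of the connected component of `v` in the configuration `x`. -/
def compSize {V : Type*} (G : SimpleGraph V) (x : G.edgeSet → Bool) (v : V) : ℕ :=
  (percoComp G x v).ncard

/-- `L⁽¹⁾`: the number of vertices of the largest connected component of the configuration. -/
def largestComp {V : Type*} (G : SimpleGraph V) (x : G.edgeSet → Bool) : ℕ :=
  sSup (Set.range (compSize G x))

/-- The probability of a single configuration under the product Bernoulli(p) measure. -/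
def configProb {E : Type*} (p : ℝ) (x : E → Bool) : ℝ :=
  ∏ᶠ e : E, if x e then p else 1 - p

/-- The product Bernoulli(p) probability of a set of configurations. -/
def probC {E : Type*} (p : ℝ) (A : Set (E → Bool)) : ℝ :=
  ∑ᶠ x ∈ A, configProb p x

/-- Expectation under the product Bernoulli(p) measure. -/
def expC {E : Type*} (p : ℝ) (f : (E → Bool) → ℝ) : ℝ :=
  ∑ᶠ x : E → Bool, configProb p x * f x

/-- Variance under the product Bernoulli(p) measure. -/
def varC {E : Type*} (p : ℝ) (f : (E → Bool) → ℝ) : ℝ :=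
  expC p (fun x => f x ^ 2) - (expC p f) ^ 2

open Classical in
/-- The configuration `x` with coordinate `e` set to `b`. -/
def setEdge {E : Type*} (x : E → Bool) (e : E) (b : Bool) : E → Bool :=
  fun e' => if e' = e then b else x e'

/-- The operator `Δ_{e,p} f (x) = f(x) - ∫ f(x) dx(e)`. -/
def deltaE {E : Type*} (p : ℝ) (f : (E → Bool) → ℝ) (e : E) (x : E → Bool) : ℝ :=
  f x - (p * f (setEdge x e true) + (1 - p) * f (setEdge x e false))

/-- The norm `‖g‖_{1,p}`. -/
def norm1 {E : Type*} (p : ℝ) (g : (E → Bool) → ℝ) : ℝ :=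
  expC p fun x => |g x|

/-- The squared norm `‖g‖_{2,p}²`. -/
def sqNorm2 {E : Type*} (p : ℝ) (g : (E → Bool) → ℝ) : ℝ :=
  expC p fun x => g x ^ 2

/-- `|E(S, Sᶜ)|`: the number of edges of `G` with one endpoint in `S` and the other outside `S`
(counted via the ordered pair whose first coordinate lies in `S`). -/
def edgeBoundaryCard {V : Type*} (G : SimpleGraph V) (S : Set V) : ℕ :=
  {q : V × V | G.Adj q.1 q.2 ∧ q.1 ∈ S ∧ q.2 ∉ S}.ncard

/-- The maximal degree of `G` is at most `d`. -/
def DegreeLE {V : Type*} (G : SimpleGraph V) (d : ℕ) : Prop :=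
  ∀ v, {u | G.Adj v u}.ncard ≤ d

/-- The Cheeger (edge-isoperimetric) constant of `G` is strictly greater than `b`. -/
def CheegerGT {V : Type*} (G : SimpleGraph V) (b : ℝ) : Prop :=
  ∀ S : Set V, 0 < S.ncard → 2 * S.ncard ≤ Nat.card V →
    b * (S.ncard : ℝ) < (edgeBoundaryCard G S : ℝ)

/-- A `(b,d)`-expander: a sequence of finite graphs with `|V_n| → ∞`, maximal degree at most `d`
and Cheeger constant greater than `b`. -/
structure ExpanderSeq (b : ℝ) (d : ℕ) where
  V : ℕ → Type
  finV : ∀ n, Finite (V n)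
  G : ∀ n, SimpleGraph (V n)
  card_tendsto : Tendsto (fun n => Nat.card (V n)) atTop atTop
  degree_le : ∀ n, DegreeLE (G n) d
  cheeger_gt : ∀ n, CheegerGT (G n) b

section SetEdge

variable {E : Type*} (x : E → Bool) (e : E) (b c : Bool)

@[simp]
theorem setEdge_self : setEdge x e b e = b :=
  if_pos rfl

variable {x e b} in
theorem setEdge_of_ne {e' : E} (h : e' ≠ e) : setEdge x e b e' = x e' :=
  if_neg h

theorem setEdge_eq_update [DecidableEq E] : setEdge x e b = Function.update x e b := by
  ext e'
  by_cases h : e' = e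
  · subst h; simp
  · rw [setEdge_of_ne h, Function.update_of_ne h]

@[simp]
theorem setEdge_setEdge : setEdge (setEdge x e b) e c = setEdge x e c := by
  classical simp only [setEdge_eq_update, Function.update_idem]

@[simp]
theorem setEdge_apply_self : setEdge x e (x e) = x := by
  classical rw [setEdge_eq_update, Function.update_eq_self]

theorem setEdge_false_le_setEdge_true : setEdge x e false ≤ setEdge x e true := by
  classical
  simp only [setEdge_eq_update]
  exact update_le_update_iff.2 ⟨Bool.false_le _, fun _ _ => le_rfl⟩

theorem le_setEdge_true : x ≤ setEdge x e true := by
  classical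
  rw [setEdge_eq_update]
  exact le_update_self_iff.2 (Bool.le_true _)

end SetEdge

section EdgeDeriv

variable {E : Type*} {f : (E → Bool) → ℝ}

/-- The discrete derivative `D_e f`: the change in `f` when the edge `e` is switched from closed to
open, all other edges keeping their state. -/
def edgeDeriv (f : (E → Bool) → ℝ) (e : E) (x : E → Bool) : ℝ :=
  f (setEdge x e true) - f (setEdge x e false)

@[simp]
theorem edgeDeriv_setEdge (f : (E → Bool) → ℝ) (e : E) (x : E → Bool) (b : Bool) :
    edgeDeriv f e (setEdge x e b) = edgeDeriv f e x := by
  simp only [edgeDeriv, setEdge_setEdge]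

theorem edgeDeriv_nonneg (hf : Monotone f) (e : E) (x : E → Bool) : 0 ≤ edgeDeriv f e x :=
  sub_nonneg.2 (hf (setEdge_false_le_setEdge_true x e))

theorem edgeDeriv_of_eq_false {e : E} {x : E → Bool} (hx : x e = false) :
    edgeDeriv f e x = f (setEdge x e true) - f x := by
  rw [edgeDeriv, ← hx, setEdge_apply_self]

end EdgeDeriv

section Expectation

variable {E : Type*} {p : ℝ} {f g : (E → Bool) → ℝ}

theorem configProb_nonneg (hp : p ∈ Set.Icc (0 : ℝ) 1) (x : E → Bool) : 0 ≤ configProb p x :=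
  finprod_nonneg fun e => by
    split_ifs
    exacts [hp.1, sub_nonneg.2 hp.2]

theorem expC_nonneg (hp : p ∈ Set.Icc (0 : ℝ) 1) (hf : 0 ≤ f) : 0 ≤ expC p f :=
  finsum_nonneg fun x => mul_nonneg (configProb_nonneg hp x) (hf x)

theorem expC_mono [Finite E] (hp : p ∈ Set.Icc (0 : ℝ) 1) (hfg : f ≤ g) : expC p f ≤ expC p g :=
  finsum_le_finsum' (Set.toFinite _) (Set.toFinite _)
    fun x => mul_le_mul_of_nonneg_left (hfg x) (configProb_nonneg hp x)

theorem expC_sum [Finite E] {ι : Type*} (p : ℝ) (s : Finset ι) (F : ι → (E → Bool) → ℝ) :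
    expC p (fun x => ∑ i ∈ s, F i x) = ∑ i ∈ s, expC p (F i) := by
  simp only [expC, Finset.mul_sum]
  exact finsum_sum_comm s _ fun _ _ => Set.toFinite _

theorem expC_const_mul (p a : ℝ) (f : (E → Bool) → ℝ) :
    expC p (fun x => a * f x) = a * expC p f := by
  simp only [expC, mul_left_comm _ a]
  exact (smul_finsum a _).symm

end Expectation

section EdgeWeights

variable {E : Type*} [Fintype E] [DecidableEq E]

theorem sum_setEdge_true_add_setEdge_false {M : Type*} [AddCommMonoid M] (e : E)
    (g : (E → Bool) → M) :
    ∑ x, (g (setEdge x e true) + g (setEdge x e false)) = 2 • ∑ x, g x := by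
  have flip_involutive : Function.Involutive fun x : E → Bool => setEdge x e (!x e) := by
    intro x
    simp only [setEdge_self, setEdge_setEdge, Bool.not_not, setEdge_apply_self]
  have sum_flip : ∑ x, g (setEdge x e (!x e)) = ∑ x, g x :=
    Equiv.sum_comp flip_involutive.toPerm g
  have pair_eq (x : E → Bool) :
      g (setEdge x e true) + g (setEdge x e false) = g x + g (setEdge x e (!x e)) := by
    conv_rhs => enter [1, 1]; rw [← setEdge_apply_self x e]
    cases x e
    exacts [add_comm _ _, rfl]
  simp only [pair_eq, Finset.sum_add_distrib, sum_flip, two_nsmul]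

/-- The probability of the states of all edges other than `e` under the product Bernoulli(p)
measure. -/
def weightErase (p : ℝ) (e : E) (x : E → Bool) : ℝ :=
  ∏ e' ∈ Finset.univ.erase e, if x e' then p else 1 - p

@[simp]
theorem weightErase_setEdge (p : ℝ) (e : E) (x : E → Bool) (b : Bool) :
    weightErase p e (setEdge x e b) = weightErase p e x :=
  Finset.prod_congr rfl fun _ h => by rw [setEdge_of_ne (Finset.ne_of_mem_erase h)]

theorem configProb_eq_weightErase_mul (p : ℝ) (e : E) (x : E → Bool) :
    configProb p x = weightErase p e x * if x e then p else 1 - p := by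
  rw [configProb, finprod_eq_prod_of_fintype, weightErase,
    Finset.prod_erase_mul _ _ (Finset.mem_univ e)]

theorem sum_weightErase_mul (p : ℝ) (e : E) (c : Bool → ℝ) (f : (E → Bool) → ℝ) :
    ∑ x, weightErase p e x * (c (x e) * f x) =
      expC p fun x => c true * f (setEdge x e true) + c false * f (setEdge x e false) := by
  rw [expC, finsum_eq_sum_of_fintype, ← nsmul_right_inj two_ne_zero,
    ← sum_setEdge_true_add_setEdge_false e, ← sum_setEdge_true_add_setEdge_false e]
  refine Finset.sum_congr rfl fun x _ => ?_
  simp only [configProb_eq_weightErase_mul p e, weightErase_setEdge, setEdge_self, setEdge_setEdge,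
    if_true, Bool.false_eq_true, if_false]
  ring

theorem hasDerivAt_configProb (p : ℝ) (x : E → Bool) :
    HasDerivAt (fun q => configProb q x)
      (∑ e, weightErase p e x * if x e then 1 else -1) p := by
  have hasDerivAt_factor (e : E) :
      HasDerivAt (fun q : ℝ => if x e then q else 1 - q) (if x e then 1 else -1) p := by
    cases x e
    · simpa using (hasDerivAt_id' p).const_sub 1
    · simpa using hasDerivAt_id' p
  simpa only [configProb, finprod_eq_prod_of_fintype, weightErase, smul_eq_mul] using
    HasDerivAt.fun_finsetProd fun e (_ : e ∈ Finset.univ) => hasDerivAt_factor e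

end EdgeWeights

section Russo

variable {E : Type*}

theorem hasDerivAt_expC [Fintype E] (p : ℝ) (f : (E → Bool) → ℝ) :
    HasDerivAt (fun q => expC q f) (∑ e, expC p (edgeDeriv f e)) p := by
  classical
  have expC_edgeDeriv (e : E) : expC p (edgeDeriv f e) =
      ∑ x, (weightErase p e x * if x e then 1 else -1) * f x := by
    simp only [mul_assoc, sum_weightErase_mul p e (fun b => if b then 1 else -1) f]
    congr 1 with x
    simp [edgeDeriv, sub_eq_add_neg]
  simp only [expC_edgeDeriv]
  rw [Finset.sum_comm]
  simp only [← Finset.sum_mul, expC, finsum_eq_sum_of_fintype]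
  exact HasDerivAt.fun_sum fun x _ => (hasDerivAt_configProb p x).mul_const (f x)

theorem expC_closed_edgeDeriv [Finite E] (p : ℝ) (f : (E → Bool) → ℝ) (e : E) :
    expC p (fun x => if x e then 0 else edgeDeriv f e x) = (1 - p) * expC p (edgeDeriv f e) := by
  classical
  have := Fintype.ofFinite E
  calc expC p (fun x => if x e then 0 else edgeDeriv f e x)
      = ∑ x, weightErase p e x * ((if x e then 0 else 1 - p) * edgeDeriv f e x) := by
        rw [expC, finsum_eq_sum_of_fintype]
        refine Finset.sum_congr rfl fun x _ => ?_
        rw [configProb_eq_weightErase_mul p e]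
        split_ifs <;> ring
    _ = expC p fun x => (1 - p) * edgeDeriv f e x := by
        simpa using sum_weightErase_mul p e (fun b => if b then 0 else 1 - p) (edgeDeriv f e)
    _ = (1 - p) * expC p (edgeDeriv f e) := expC_const_mul p (1 - p) _

end Russo

section EdgeBoundary

variable {V : Type*}

/-- The edge boundary `∂_E S`, as a set of edges of `G`; `edgeBoundaryCard` counts it through
ordered pairs of vertices. -/
def edgeBoundary (G : SimpleGraph V) (S : Set V) : Set G.edgeSet :=
  {e | ∃ u ∈ S, ∃ v ∉ S, e.1 = s(u, v)}

theorem edgeBoundaryCard_eq_ncard (G : SimpleGraph V) (S : Set V) :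
    edgeBoundaryCard G S = (edgeBoundary G S).ncard := by
  have injOn : Set.InjOn (fun q : V × V => s(q.1, q.2))
      {q | G.Adj q.1 q.2 ∧ q.1 ∈ S ∧ q.2 ∉ S} := by
    rintro ⟨u, v⟩ ⟨-, hu, -⟩ ⟨u', v'⟩ ⟨-, -, hv'⟩ heq
    rcases Sym2.eq_iff.1 heq with ⟨rfl, rfl⟩ | ⟨rfl, rfl⟩
    exacts [rfl, absurd hu hv']
  rw [edgeBoundaryCard, ← injOn.ncard_image,
    ← Set.ncard_image_of_injective _ Subtype.val_injective]
  congr 1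
  ext e
  constructor
  · rintro ⟨⟨u, v⟩, ⟨hadj, hu, hv⟩, rfl⟩
    exact ⟨⟨s(u, v), hadj⟩, ⟨u, hu, v, hv, rfl⟩, rfl⟩
  · rintro ⟨⟨_, hadj⟩, ⟨u, hu, v, hv, rfl⟩, rfl⟩
    exact ⟨(u, v), ⟨hadj, hu, hv⟩, rfl⟩

end EdgeBoundary

section Components

variable {V : Type*} {G : SimpleGraph V} {x : G.edgeSet → Bool} {e : G.edgeSet}

theorem percoGraph_adj {u v : V} (h : G.Adj u v) :
    (percoGraph G x).Adj u v ↔ x ⟨s(u, v), h⟩ = true := by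
  rw [percoGraph, SimpleGraph.fromEdgeSet_adj]
  exact ⟨fun ⟨⟨_, hx⟩, _⟩ => hx, fun hx => ⟨⟨h, hx⟩, h.ne⟩⟩

theorem percoGraph_mono : Monotone (percoGraph G) := fun _ _ hxy =>
  SimpleGraph.fromEdgeSet_mono fun _ ⟨he, hx⟩ => ⟨he, Bool.le_iff_imp.1 (hxy _) hx⟩

theorem percoComp_mono (v : V) : Monotone fun x => percoComp G x v := fun _ _ hxy _ hu =>
  SimpleGraph.Reachable.mono (percoGraph_mono hxy) hu

theorem mem_percoComp_of_open {w u v : V} (h : G.Adj u v) (hu : u ∈ percoComp G x w)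
    (hx : x ⟨s(u, v), h⟩ = true) : v ∈ percoComp G x w :=
  SimpleGraph.Reachable.trans hu ((percoGraph_adj h).2 hx).reachable

theorem eq_false_of_mem_edgeBoundary_percoComp {w : V}
    (he : e ∈ edgeBoundary G (percoComp G x w)) : x e = false := by
  obtain ⟨_, hadj⟩ := e
  obtain ⟨u, hu, v, hv, rfl⟩ := he
  exact Bool.eq_false_iff.2 fun hx => hv (mem_percoComp_of_open hadj hu hx)

theorem percoComp_ssubset_percoComp_setEdge_true {w : V}
    (he : e ∈ edgeBoundary G (percoComp G x w)) :
    percoComp G x w ⊂ percoComp G (setEdge x e true) w := by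
  have hsub := percoComp_mono w (le_setEdge_true x e)
  obtain ⟨_, hadj⟩ := e
  obtain ⟨u, hu, v, hv, rfl⟩ := he
  exact (Set.ssubset_iff_of_subset hsub).2
    ⟨v, mem_percoComp_of_open hadj (hsub hu) (setEdge_self ..), hv⟩

variable [Finite V]

theorem compSize_le_largestComp (x : G.edgeSet → Bool) (v : V) :
    compSize G x v ≤ largestComp G x :=
  le_csSup (Set.finite_range _).bddAbove ⟨v, rfl⟩

theorem largestComp_mono : Monotone (largestComp G) := fun _ y hxy =>
  csSup_le' <| Set.forall_mem_range.2 fun v =>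
    (Set.ncard_le_ncard (percoComp_mono v hxy)).trans (compSize_le_largestComp y v)

theorem largestComp_lt_largestComp_setEdge_true {w : V}
    (hw : compSize G x w = largestComp G x) (he : e ∈ edgeBoundary G (percoComp G x w)) :
    largestComp G x < largestComp G (setEdge x e true) :=
  hw ▸ (Set.ncard_lt_ncard (percoComp_ssubset_percoComp_setEdge_true he)).trans_le
    (compSize_le_largestComp _ w)

theorem edgeBoundaryCard_le_sum_edgeDeriv [Fintype G.edgeSet] {w : V}
    (hw : compSize G x w = largestComp G x) :
    (edgeBoundaryCard G (percoComp G x w) : ℝ) ≤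
      ∑ e, if x e then 0 else edgeDeriv (fun y => (largestComp G y : ℝ)) e x := by
  classical
  have monotone_largestComp : Monotone fun y => (largestComp G y : ℝ) :=
    Nat.mono_cast.comp largestComp_mono
  have card_eq : (edgeBoundaryCard G (percoComp G x w) : ℝ) =
      ∑ e, if e ∈ edgeBoundary G (percoComp G x w) then 1 else 0 := by
    simp [edgeBoundaryCard_eq_ncard, Set.ncard_eq_toFinset_card']
  rw [card_eq]
  refine Finset.sum_le_sum fun e _ => ?_
  by_cases he : e ∈ edgeBoundary G (percoComp G x w)
  · have hclosed : x e = false := eq_false_of_mem_edgeBoundary_percoComp he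
    rw [if_pos he, hclosed, if_neg Bool.false_ne_true, edgeDeriv_of_eq_false hclosed,
      le_sub_iff_add_le']
    exact_mod_cast largestComp_lt_largestComp_setEdge_true hw he
  · rw [if_neg he]
    split_ifs
    exacts [le_rfl, edgeDeriv_nonneg monotone_largestComp e x]

end Components

theorem stmt15_general {V : Type*} [Finite V] (G : SimpleGraph V) {p : ℝ}
    (hp : p ∈ Set.Ico (0 : ℝ) 1) (giant : (G.edgeSet → Bool) → Set V)
    (hgiant : ∀ x, (∃ v : V, giant x = percoComp G x v) ∧
      (giant x).ncard = largestComp G x) :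
    (1 / (1 - p)) * expC p (fun x => (edgeBoundaryCard G (giant x) : ℝ)) ≤
      deriv (fun q => expC q (fun x => (largestComp G x : ℝ))) p := by
  have := Fintype.ofFinite G.edgeSet
  set L : (G.edgeSet → Bool) → ℝ := fun x => largestComp G x
  have boundary_le (x : G.edgeSet → Bool) :
      (edgeBoundaryCard G (giant x) : ℝ) ≤ ∑ e, if x e then 0 else edgeDeriv L e x := by
    obtain ⟨⟨w, hw⟩, hcard⟩ := hgiant x
    rw [hw] at hcard ⊢
    exact edgeBoundaryCard_le_sum_edgeDeriv hcard
  rw [(hasDerivAt_expC p L).deriv, one_div, inv_mul_le_iff₀ (sub_pos.2 hp.2)]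
  calc expC p (fun x => (edgeBoundaryCard G (giant x) : ℝ))
      ≤ expC p fun x => ∑ e, if x e then 0 else edgeDeriv L e x :=
        expC_mono (Set.Ico_subset_Icc_self hp) boundary_le
    _ = ∑ e, expC p fun x => if x e then 0 else edgeDeriv L e x := expC_sum p _ _
    _ = (1 - p) * ∑ e, expC p (edgeDeriv L e) := by
        simp only [expC_closed_edgeDeriv, Finset.mul_sum]

/-- `(d/dp) E_p(L⁽¹⁾) ≥ (1/(2(1-p))) E_p(|∂_E 𝒞⁽¹⁾|)`, where `𝒞⁽¹⁾` is the
vertex set of the largest connected component (ties broken by a fixed rule, i.e. by an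
arbitrary fixed choice function `giant` selecting a largest component). -/
theorem stmt15 (V : Type) [Finite V] (G : SimpleGraph V) (p : ℝ) (hp : p ∈ Set.Ioo (0 : ℝ) 1)
    (giant : (G.edgeSet → Bool) → Set V)
    (hgiant : ∀ x, (∃ v : V, giant x = percoComp G x v) ∧
      (giant x).ncard = largestComp G x) :
    (1 / (2 * (1 - p))) * expC p (fun x => (edgeBoundaryCard G (giant x) : ℝ)) ≤
      deriv (fun q => expC q (fun x => (largestComp G x : ℝ))) p := by
  refine (mul_le_mul_of_nonneg_right ?_
    (expC_nonneg (Set.Ioo_subset_Icc_self hp) fun _ => Nat.cast_nonneg _)).trans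
    (stmt15_general G (Set.Ioo_subset_Ico_self hp) giant hgiant)
  exact one_div_le_one_div_of_le (sub_pos.2 hp.2) (by linarith [hp.2])
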